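/- For every b > 0 there exists δ > 0 such that for all sufficiently large N, the following holds: for every pair of sets A, B ⊆ {-1,1}^N such that ξ_0(A × B) ≥ 2^{-δN}, and every s ∈ ℝ, one has (1/2)·( e^s · ξ_{-√(b/N)}(A × B) + e^{-s} · ξ_{√(b/N)}(A × B) ) ≥ (2/3)·ξ_0(A × B). -/

import Mathlib

/-!
The idea is to reveal the points `x ∈ A` and `y ∈ B` one coordinate at a time. If the next
coordinates have conditional means `μ` and `ν`, draw them from the coupling with density
`1 + p (a - μ) (c - ν)` with respect to the product of the two conditional laws: it imitates the
correlation of `ξ_p`, but keeps both marginals. Jensen's inequality under this change of measure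
bounds the logarithm of `ξ_p (A × B) / ξ_0 (A × B)` below by `p ⟨m_A, m_B⟩`, where `m_A` and `m_B`
are the barycenters, up to an error `O(p ^ 2 (μ ^ 2 + ν ^ 2))` per coordinate. By Pinsker's
inequality and the chain rule for entropy, these errors add up to at most a multiple of `p ^ 2`
times the entropy deficit of `A` and `B`, and for `p ^ 2 = b / N` this is at most `1 / 3` once the
deficit is a small multiple of `N`. The terms `± p ⟨m_A, m_B⟩` for `± p`, together with `± s`, only
contribute a factor `cosh ≥ 1`.
-/

/-- Number of coordinates on which `x` and `y` agree. -/
def agree {N : ℕ} (x y : Fin N → Bool) : ℕ :=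
  (Finset.univ.filter fun i => x i = y i).card

/-- The probability that `ξ_p` assigns to the pair `(x, y)`. -/
noncomputable def xiMass (N : ℕ) (p : ℝ) (x y : Fin N → Bool) : ℝ :=
  (1 / 2) ^ N * ((1 + p) / 2) ^ agree x y * ((1 - p) / 2) ^ (N - agree x y)

/-- The probability that `(x,y) ∈ A × B` under `ξ_p`. -/
noncomputable def xiProb (N : ℕ) (p : ℝ) (A B : Finset (Fin N → Bool)) : ℝ :=
  ∑ x ∈ A, ∑ y ∈ B, xiMass N p x y

/-- Jensen's inequality after passing from the density `g` to the probability density `f`; the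
exponent on the left involves the `χ²`-type bound `log (g / f) ≥ 1 - f / g`. -/
theorem exp_sum_mul_le_sum_mul_exp {ι : Type*} {s : Finset ι} {w f g : ι → ℝ}
    (hw : ∀ i ∈ s, 0 ≤ w i) (hf : ∀ i ∈ s, 0 ≤ f i) (hg : ∀ i ∈ s, 0 < g i)
    (hsum : ∑ i ∈ s, w i * f i = 1) (l : ι → ℝ) :
    Real.exp (∑ i ∈ s, w i * f i * (l i + (1 - f i / g i)))
      ≤ ∑ i ∈ s, w i * g i * Real.exp (l i) := by
  have hjensen := convexOn_exp.map_sum_le (p := fun i => l i + (1 - f i / g i))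
    (fun i hi => mul_nonneg (hw i hi) (hf i hi)) hsum fun i _ => Set.mem_univ _
  refine hjensen.trans (Finset.sum_le_sum fun i hi => ?_)
  have htilt : f i * Real.exp (1 - f i / g i) ≤ g i := by
    have hratio : f i / g i ≤ Real.exp (f i / g i - 1) := by
      linarith [Real.add_one_le_exp (f i / g i - 1)]
    rw [← neg_sub, Real.exp_neg, ← div_eq_mul_inv, div_le_iff₀ (Real.exp_pos _)]
    exact (div_le_iff₀' (hg i hi)).1 hratio
  calc w i * f i * Real.exp (l i + (1 - f i / g i))
      = w i * (f i * Real.exp (1 - f i / g i)) * Real.exp (l i) := by rw [Real.exp_add]; ring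
    _ ≤ w i * g i * Real.exp (l i) := by
        have := hw i hi
        gcongr

theorem mul_add_one_sub_exp_le_mul_log {w : ℝ} (hw : 0 ≤ w) (t : ℝ) :
    w * (t + 1) - Real.exp t ≤ w * Real.log w := by
  rcases hw.eq_or_lt with rfl | hw
  · simpa using (Real.exp_pos t).le
  · have htangent : t - Real.log w + 1 ≤ Real.exp t / w := by
      simpa [Real.exp_sub, Real.exp_log hw] using Real.add_one_le_exp (t - Real.log w)
    rw [le_div_iff₀ hw] at htangent
    linarith

theorem sub_sub_two_mul_sq_le_mul_one_sub_div {f g : ℝ} (hg : 1 / 2 ≤ g) :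
    (g - f) - 2 * (g - f) ^ 2 ≤ f * (1 - f / g) := by
  have hg0 : 0 < g := by linarith
  have hsplit : f * (1 - f / g) = (g - f) - (g - f) ^ 2 / g := by
    field_simp
    ring
  have hsq : (g - f) ^ 2 / g ≤ 2 * (g - f) ^ 2 := by
    rw [div_le_iff₀ hg0]
    nlinarith [sq_nonneg (g - f)]
  linarith

section Signs

/-- The sign in `{-1, 1}` encoded by a Boolean, with `true` for `1`. -/
noncomputable def boolSign (a : Bool) : ℝ := if a then 1 else -1

/-- The weight of the sign `a` under the law on `{-1, 1}` with mean `μ`. -/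
noncomputable def signWeight (μ : ℝ) (a : Bool) : ℝ := (1 + boolSign a * μ) / 2

/-- The density of `signCoupling` with respect to the product of the laws on `{-1, 1}` with means
`μ` and `ν`. -/
noncomputable def couplingDensity (p μ ν : ℝ) (a c : Bool) : ℝ :=
  1 + p * (boolSign a - μ) * (boolSign c - ν)

/-- The coupling of two signs with means `μ`, `ν` and covariance `p (1 - μ ^ 2) (1 - ν ^ 2)`. -/
noncomputable def signCoupling (p μ ν : ℝ) (a c : Bool) : ℝ :=
  signWeight μ a * signWeight ν c * couplingDensity p μ ν a c

variable {p μ ν : ℝ}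

@[simp]
theorem boolSign_true : boolSign true = 1 := if_pos rfl

@[simp]
theorem boolSign_false : boolSign false = -1 := if_neg Bool.false_ne_true

theorem abs_boolSign (a : Bool) : |boolSign a| = 1 := by
  cases a <;> simp

theorem signWeight_nonneg (hμ : |μ| ≤ 1) (a : Bool) : 0 ≤ signWeight μ a := by
  have := abs_le.1 hμ
  cases a <;> simp only [signWeight, boolSign_true, boolSign_false] <;> linarith

theorem sum_signWeight (μ : ℝ) : ∑ a, signWeight μ a = 1 := by
  simp only [Fintype.sum_bool, signWeight, boolSign_true, boolSign_false]
  ring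

theorem couplingDensity_nonneg (hp : |p| ≤ 1 / 4) (hμ : |μ| ≤ 1) (hν : |ν| ≤ 1) (a c : Bool) :
    0 ≤ couplingDensity p μ ν a c := by
  have hdiff : ∀ (e : Bool) (r : ℝ), |r| ≤ 1 → |boolSign e - r| ≤ 2 := fun e r hr =>
    (abs_sub _ _).trans (by rw [abs_boolSign]; linarith)
  have hbound : |p * (boolSign a - μ) * (boolSign c - ν)| ≤ 1 := by
    rw [abs_mul, abs_mul]
    calc |p| * |boolSign a - μ| * |boolSign c - ν| ≤ 1 / 4 * 2 * 2 := by
          gcongr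
          · exact hdiff a μ hμ
          · exact hdiff c ν hν
      _ = 1 := by norm_num
  rw [couplingDensity]
  linarith [(abs_le.1 hbound).1]

theorem three_quarters_le_one_add_mul_boolSign (hp : |p| ≤ 1 / 4) (a c : Bool) :
    3 / 4 ≤ 1 + p * boolSign a * boolSign c := by
  have := abs_le.1 hp
  cases a <;> cases c <;> simp only [boolSign_true, boolSign_false] <;> linarith

theorem sum_signCoupling (p μ ν : ℝ) : ∑ a, ∑ c, signCoupling p μ ν a c = 1 := by
  simp only [Fintype.sum_bool, signCoupling, couplingDensity, signWeight, boolSign_true,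
    boolSign_false]
  ring

theorem sum_signCoupling_mul_add (d e : Bool → ℝ) :
    ∑ a, ∑ c, signCoupling p μ ν a c * (d a + e c)
      = ∑ a, signWeight μ a * d a + ∑ c, signWeight ν c * e c := by
  simp only [Fintype.sum_bool, signCoupling, couplingDensity, signWeight, boolSign_true,
    boolSign_false]
  ring

theorem sq_div_two_sub_log_two_le_sum_signWeight_mul_log (hμ : |μ| ≤ 1) :
    μ ^ 2 / 2 - Real.log 2 ≤ ∑ a, signWeight μ a * Real.log (signWeight μ a) := by
  -- Gibbs' inequality against the tilted weights `exp (μ a - μ ^ 2 / 2) / 2`, whose total is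
  -- at most one because `cosh μ ≤ exp (μ ^ 2 / 2)`.
  let t : Bool → ℝ := fun a => boolSign a * μ - μ ^ 2 / 2 - Real.log 2
  have hexp : ∑ a, Real.exp (t a) ≤ 1 := by
    have hcosh : ∑ a, Real.exp (t a) = Real.cosh μ / Real.exp (μ ^ 2 / 2) := by
      simp only [t, Fintype.sum_bool, boolSign_true, boolSign_false, one_mul, neg_one_mul,
        Real.exp_sub, Real.exp_log two_pos, Real.cosh_eq]
      ring
    rw [hcosh]
    exact div_le_one_of_le₀ (Real.cosh_le_exp_half_sq μ) (Real.exp_pos _).le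
  calc μ ^ 2 / 2 - Real.log 2 = ∑ a, signWeight μ a * (t a + 1) - 1 := by
        simp only [t, Fintype.sum_bool, signWeight, boolSign_true, boolSign_false]
        ring
    _ ≤ ∑ a, (signWeight μ a * (t a + 1) - Real.exp (t a)) := by
        rw [Finset.sum_sub_distrib]
        linarith
    _ ≤ ∑ a, signWeight μ a * Real.log (signWeight μ a) :=
        Finset.sum_le_sum fun a _ => mul_add_one_sub_exp_le_mul_log (signWeight_nonneg hμ a) _

theorem le_sum_signCoupling_mul_one_sub_div (hp : |p| ≤ 1 / 4) (hμ : |μ| ≤ 1) (hν : |ν| ≤ 1) :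
    p * μ * ν - 2 * p ^ 2 * (μ ^ 2 + ν ^ 2) ≤ ∑ a, ∑ c, signCoupling p μ ν a c *
      (1 - couplingDensity p μ ν a c / (1 + p * boolSign a * boolSign c)) := by
  calc p * μ * ν - 2 * p ^ 2 * (μ ^ 2 + ν ^ 2)
      ≤ p * μ * ν - 2 * p ^ 2 * (μ ^ 2 + ν ^ 2) + 2 * (p * μ * ν) ^ 2 := by
        linarith [sq_nonneg (p * μ * ν)]
    _ = ∑ a, ∑ c, signWeight μ a * signWeight ν c *
          ((1 + p * boolSign a * boolSign c - couplingDensity p μ ν a c)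
            - 2 * (1 + p * boolSign a * boolSign c - couplingDensity p μ ν a c) ^ 2) := by
        simp only [Fintype.sum_bool, couplingDensity, signWeight, boolSign_true, boolSign_false]
        ring
    _ ≤ _ := by
        refine Finset.sum_le_sum fun a _ => Finset.sum_le_sum fun c _ => ?_
        rw [signCoupling, mul_assoc _ (couplingDensity p μ ν a c)]
        exact mul_le_mul_of_nonneg_left
          (sub_sub_two_mul_sq_le_mul_one_sub_div
            (by linarith [three_quarters_le_one_add_mul_boolSign hp a c]))
          (mul_nonneg (signWeight_nonneg hμ a) (signWeight_nonneg hν c))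

theorem exp_sum_signCoupling_mul_le (hp : |p| ≤ 1 / 4) (hμ : |μ| ≤ 1) (hν : |ν| ≤ 1)
    (l : Bool → Bool → ℝ) :
    Real.exp (∑ a, ∑ c, signCoupling p μ ν a c * l a c + p * μ * ν - 2 * p ^ 2 * (μ ^ 2 + ν ^ 2))
      ≤ ∑ a, ∑ c, signWeight μ a * signWeight ν c * (1 + p * boolSign a * boolSign c) *
          Real.exp (l a c) := by
  let g : Bool → Bool → ℝ := fun a c => 1 + p * boolSign a * boolSign c
  have hsplit : ∑ a, ∑ c, signCoupling p μ ν a c * (l a c + (1 - couplingDensity p μ ν a c / g a c))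
      = ∑ a, ∑ c, signCoupling p μ ν a c * l a c
        + ∑ a, ∑ c, signCoupling p μ ν a c * (1 - couplingDensity p μ ν a c / g a c) := by
    simp only [mul_add, Finset.sum_add_distrib]
  calc _ ≤ Real.exp (∑ a, ∑ c, signCoupling p μ ν a c *
          (l a c + (1 - couplingDensity p μ ν a c / g a c))) := by
        rw [Real.exp_le_exp, hsplit]
        linarith [le_sum_signCoupling_mul_one_sub_div hp hμ hν]
    _ ≤ _ := by
        have hjensen := exp_sum_mul_le_sum_mul_exp (s := (Finset.univ : Finset (Bool × Bool)))
          (w := fun z => signWeight μ z.1 * signWeight ν z.2)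
          (f := fun z => couplingDensity p μ ν z.1 z.2) (g := fun z => g z.1 z.2)
          (fun z _ => mul_nonneg (signWeight_nonneg hμ z.1) (signWeight_nonneg hν z.2))
          (fun z _ => couplingDensity_nonneg hp hμ hν z.1 z.2)
          (fun z _ => by linarith [three_quarters_le_one_add_mul_boolSign hp z.1 z.2])
          (by rw [Fintype.sum_prod_type]; exact sum_signCoupling p μ ν) (fun z => l z.1 z.2)
        rw [Fintype.sum_prod_type, Fintype.sum_prod_type] at hjensen
        exact hjensen

theorem quadratic_mean_le_sum_signCoupling (hμ : |μ| ≤ 1) (hν : |ν| ≤ 1) (f g : Bool → ℝ) :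
    p * ((∑ a, signWeight μ a * f a) * ∑ c, signWeight ν c * g c)
        + p ^ 2 / 2 * ((∑ a, signWeight μ a * f a) ^ 2 + (∑ c, signWeight ν c * g c) ^ 2)
      ≤ ∑ a, ∑ c, signCoupling p μ ν a c *
          (p * (f a * g c) + p ^ 2 / 2 * (f a ^ 2 + g c ^ 2)) := by
  have hμ' : 0 ≤ 1 - μ ^ 2 := sub_nonneg.2 ((sq_le_one_iff_abs_le_one μ).2 hμ)
  have hν' : 0 ≤ 1 - ν ^ 2 := sub_nonneg.2 ((sq_le_one_iff_abs_le_one ν).2 hν)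
  calc _ ≤ p * ((∑ a, signWeight μ a * f a) * ∑ c, signWeight ν c * g c)
        + p ^ 2 / 2 * ((∑ a, signWeight μ a * f a) ^ 2 + (∑ c, signWeight ν c * g c) ^ 2)
        + p ^ 2 / 8 * ((1 - μ ^ 2) * (1 - ν ^ 2) * (f true - f false + (g true - g false)) ^ 2
          + (1 - μ ^ 2) * ν ^ 2 * (f true - f false) ^ 2
          + (1 - ν ^ 2) * μ ^ 2 * (g true - g false) ^ 2) :=
        le_add_of_nonneg_right (by positivity)
    _ = _ := by
        simp only [Fintype.sum_bool, signCoupling, couplingDensity, signWeight, boolSign_true,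
          boolSign_false]
        ring

end Signs

section Slices

open scoped BigOperators

/-- The points of the `n`-cube which lie in `A` once the coordinate `a` is put in front. -/
def cubeSlice {n : ℕ} (A : Finset (Fin (n + 1) → Bool)) (a : Bool) : Finset (Fin n → Bool) :=
  Finset.univ.filter fun x => (Fin.cons a x : Fin (n + 1) → Bool) ∈ A

/-- The mean in `[-1, 1]ⁿ` of the uniform law on `A`; it is zero for empty `A`. -/
noncomputable def barycenter {n : ℕ} (A : Finset (Fin n → Bool)) (i : Fin n) : ℝ :=
  𝔼 x ∈ A, boolSign (x i)

/-- The relative entropy of the uniform law on `A` with respect to the uniform law on the cube; for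
empty `A` the convention `log 0 = 0` makes it `n * log 2`. -/
noncomputable def cubeDeficit {n : ℕ} (A : Finset (Fin n → Bool)) : ℝ :=
  n * Real.log 2 - Real.log A.card

theorem cubeDeficit_eq_zero_of_dim_zero (A : Finset (Fin 0 → Bool)) : cubeDeficit A = 0 := by
  have hcard : A.card ≤ 1 := by simpa using A.card_le_univ
  interval_cases h : A.card <;> simp [cubeDeficit, h]

theorem abs_barycenter_le_one {n : ℕ} (A : Finset (Fin n → Bool)) (i : Fin n) :
    |barycenter A i| ≤ 1 := by
  rcases A.eq_empty_or_nonempty with rfl | hA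
  · simp [barycenter]
  · exact (Finset.abs_expect_le _ _).trans
      (Finset.expect_le hA fun x _ => (abs_boolSign (x i)).le)

variable {n : ℕ} {A : Finset (Fin (n + 1) → Bool)}

theorem sum_eq_sum_cubeSlice {M : Type*} [AddCommMonoid M] (A : Finset (Fin (n + 1) → Bool))
    (f : (Fin (n + 1) → Bool) → M) :
    ∑ x ∈ A, f x = ∑ a, ∑ x ∈ cubeSlice A a, f (Fin.cons a x) := by
  have hind : ∑ x ∈ A, f x = ∑ x, if x ∈ A then f x else 0 := by
    rw [← Finset.sum_filter, Finset.filter_univ_mem]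
  rw [hind, ← (Fin.consEquiv fun _ : Fin (n + 1) => Bool).sum_comp, Fintype.sum_prod_type]
  refine Finset.sum_congr rfl fun a _ => ?_
  rw [cubeSlice, Finset.sum_filter]
  rfl

theorem card_cubeSlice (A : Finset (Fin (n + 1) → Bool)) (a : Bool) :
    ((cubeSlice A a).card : ℝ) = A.card * signWeight (barycenter A 0) a := by
  have hmean : A.card * barycenter A 0 = (cubeSlice A true).card - (cubeSlice A false).card := by
    rw [barycenter, Finset.card_mul_expect, sum_eq_sum_cubeSlice]
    simp [sub_eq_add_neg]
  have hcard : (A.card : ℝ) = (cubeSlice A true).card + (cubeSlice A false).card := by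
    simpa using sum_eq_sum_cubeSlice A fun _ => (1 : ℝ)
  cases a <;> simp only [signWeight, boolSign_true, boolSign_false] <;> linarith

theorem barycenter_succ (hA : A.Nonempty) (i : Fin n) :
    barycenter A i.succ
      = ∑ a, signWeight (barycenter A 0) a * barycenter (cubeSlice A a) i := by
  have hpos : (A.card : ℝ) ≠ 0 := by exact_mod_cast hA.card_pos.ne'
  refine mul_left_cancel₀ hpos ?_
  simp only [Finset.mul_sum, ← mul_assoc, ← card_cubeSlice]
  simp only [barycenter, Finset.card_mul_expect, sum_eq_sum_cubeSlice A, Fin.cons_succ]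

theorem sum_cubeDeficit_cubeSlice_add_le (hA : A.Nonempty) :
    ∑ a, signWeight (barycenter A 0) a * cubeDeficit (cubeSlice A a) + barycenter A 0 ^ 2 / 2
      ≤ cubeDeficit A := by
  have hpos : (A.card : ℝ) ≠ 0 := by exact_mod_cast hA.card_pos.ne'
  have hpinsker := sq_div_two_sub_log_two_le_sum_signWeight_mul_log (abs_barycenter_le_one A 0)
  set μ := barycenter A 0
  have hslice : ∀ a, signWeight μ a * cubeDeficit (cubeSlice A a)
      = signWeight μ a * (n * Real.log 2 - Real.log A.card)
        - signWeight μ a * Real.log (signWeight μ a) := by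
    intro a
    rw [cubeDeficit, card_cubeSlice]
    by_cases h : signWeight μ a = 0
    · simp [h]
    · rw [Real.log_mul hpos h]
      ring
  have hchain : ∑ a, signWeight μ a * cubeDeficit (cubeSlice A a)
      = n * Real.log 2 - Real.log A.card - ∑ a, signWeight μ a * Real.log (signWeight μ a) := by
    rw [Finset.sum_congr rfl fun a _ => hslice a, Finset.sum_sub_distrib, ← Finset.sum_mul,
      sum_signWeight, one_mul]
  rw [hchain, cubeDeficit]
  push_cast
  linarith

end Slices

theorem xiMass_eq_prod {n : ℕ} (p : ℝ) (x y : Fin n → Bool) :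
    xiMass n p x y = ∏ i, (1 + p * boolSign (x i) * boolSign (y i)) / 4 := by
  have hfactor : ∀ i, (1 + p * boolSign (x i) * boolSign (y i)) / 4
      = (1 / 2) * (if x i = y i then (1 + p) / 2 else (1 - p) / 2) := by
    intro i
    cases x i <;> cases y i <;> simp <;> ring
  have hdisagree : (Finset.univ.filter fun i => ¬ x i = y i).card = n - agree x y := by
    have hcard := Finset.card_filter_add_card_filter_not (s := Finset.univ) (fun i => x i = y i)
    rw [Finset.card_univ, Fintype.card_fin] at hcard
    exact Nat.eq_sub_of_add_eq' hcard
  rw [Finset.prod_congr rfl fun i _ => hfactor i, Finset.prod_mul_distrib, Finset.prod_ite,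
    Finset.prod_const, Finset.prod_const, Finset.prod_const, hdisagree, Finset.card_univ,
    Fintype.card_fin, xiMass, agree, mul_assoc]

theorem xiProb_zero_eq {n : ℕ} (A B : Finset (Fin n → Bool)) :
    xiProb n 0 A B = A.card * B.card / 4 ^ n := by
  simp [xiProb, xiMass_eq_prod, div_eq_mul_inv, mul_assoc]

theorem xiProb_zero_nonneg {n : ℕ} (A B : Finset (Fin n → Bool)) : 0 ≤ xiProb n 0 A B := by
  rw [xiProb_zero_eq]
  positivity

theorem xiProb_succ {n : ℕ} (p : ℝ) (A B : Finset (Fin (n + 1) → Bool)) :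
    xiProb (n + 1) p A B = ∑ a, ∑ c, (1 + p * boolSign a * boolSign c) / 4 *
      xiProb n p (cubeSlice A a) (cubeSlice B c) := by
  simp only [xiProb, sum_eq_sum_cubeSlice A, sum_eq_sum_cubeSlice B, Finset.mul_sum]
  refine Finset.sum_congr rfl fun a _ => Finset.sum_comm.trans ?_
  refine Finset.sum_congr rfl fun c _ => Finset.sum_congr rfl fun x _ =>
    Finset.sum_congr rfl fun y _ => ?_
  simp only [xiMass_eq_prod, Fin.prod_univ_succ, Fin.cons_zero, Fin.cons_succ]

theorem xiProb_zero_cubeSlice {n : ℕ} (A B : Finset (Fin (n + 1) → Bool)) (a c : Bool) :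
    xiProb n 0 (cubeSlice A a) (cubeSlice B c) = 4 * xiProb (n + 1) 0 A B *
      (signWeight (barycenter A 0) a * signWeight (barycenter B 0) c) := by
  rw [xiProb_zero_eq, xiProb_zero_eq, card_cubeSlice, card_cubeSlice, pow_succ]
  field_simp

theorem cubeDeficit_add_cubeDeficit_le {n : ℕ} {A B : Finset (Fin n → Bool)} {r : ℝ}
    (h : (2 : ℝ) ^ (-r) ≤ xiProb n 0 A B) :
    cubeDeficit A + cubeDeficit B ≤ r * Real.log 2 := by
  have hpos : (0 : ℝ) < 2 ^ (-r) := by positivity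
  have hne : (A.card : ℝ) * B.card ≠ 0 := fun h0 => by
    rw [xiProb_zero_eq, h0, zero_div] at h
    exact hpos.not_ge h
  obtain ⟨hA, hB⟩ := mul_ne_zero_iff.1 hne
  have hlog := Real.log_le_log hpos h
  rw [xiProb_zero_eq, Real.log_rpow two_pos, Real.log_div hne (by positivity), Real.log_mul hA hB,
    Real.log_pow, show (4 : ℝ) = 2 ^ 2 by norm_num, Real.log_pow] at hlog
  push_cast at hlog
  unfold cubeDeficit
  linarith

/-- The lower bound for `log (ξ_p (A × B) / ξ_0 (A × B))` that is proved by induction on the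
dimension. The squares of the barycenters absorb the covariance which `signCoupling` creates between
the barycenters of the slices. -/
noncomputable def rectExponent {n : ℕ} (p : ℝ) (A B : Finset (Fin n → Bool)) : ℝ :=
  ∑ i, (p * (barycenter A i * barycenter B i)
      + p ^ 2 / 2 * (barycenter A i ^ 2 + barycenter B i ^ 2))
    - 5 * p ^ 2 * (cubeDeficit A + cubeDeficit B)

theorem rectExponent_succ_le {n : ℕ} {A B : Finset (Fin (n + 1) → Bool)} (p : ℝ)
    (hA : A.Nonempty) (hB : B.Nonempty) :
    rectExponent p A B
      ≤ ∑ a, ∑ c, signCoupling p (barycenter A 0) (barycenter B 0) a c *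
          rectExponent p (cubeSlice A a) (cubeSlice B c)
        + p * barycenter A 0 * barycenter B 0
        - 2 * p ^ 2 * (barycenter A 0 ^ 2 + barycenter B 0 ^ 2) := by
  have htail := Finset.sum_le_sum fun (i : Fin n) (_ : i ∈ Finset.univ) =>
    quadratic_mean_le_sum_signCoupling (p := p) (abs_barycenter_le_one A 0)
      (abs_barycenter_le_one B 0) (fun a => barycenter (cubeSlice A a) i)
      (fun c => barycenter (cubeSlice B c) i)
  rw [Finset.sum_comm] at htail
  simp_rw [Finset.sum_comm (s := (Finset.univ : Finset (Fin n))), ← Finset.mul_sum,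
    ← barycenter_succ hA, ← barycenter_succ hB] at htail
  have hdeficit := mul_le_mul_of_nonneg_left
    (add_le_add (sum_cubeDeficit_cubeSlice_add_le hA) (sum_cubeDeficit_cubeSlice_add_le hB))
    (show 0 ≤ 5 * p ^ 2 by positivity)
  have hsplit := sum_signCoupling_mul_add (p := p) (μ := barycenter A 0) (ν := barycenter B 0)
    (fun a => cubeDeficit (cubeSlice A a)) (fun c => cubeDeficit (cubeSlice B c))
  simp only [rectExponent, Fin.sum_univ_succ (n := n), mul_sub, Finset.sum_sub_distrib,
    mul_left_comm _ (5 * p ^ 2), ← Finset.mul_sum, hsplit]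
  linarith

theorem xiProb_zero_mul_exp_rectExponent_le {n : ℕ} {p : ℝ} (hp : |p| ≤ 1 / 4)
    (A B : Finset (Fin n → Bool)) :
    xiProb n 0 A B * Real.exp (rectExponent p A B) ≤ xiProb n p A B := by
  induction n with
  | zero => simp [rectExponent, cubeDeficit_eq_zero_of_dim_zero, xiProb, xiMass_eq_prod]
  | succ n ih =>
    rcases A.eq_empty_or_nonempty with rfl | hA
    · simp [xiProb]
    rcases B.eq_empty_or_nonempty with rfl | hB
    · simp [xiProb]
    have hexp := (Real.exp_le_exp.2 (rectExponent_succ_le p hA hB)).trans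
      (exp_sum_signCoupling_mul_le hp (abs_barycenter_le_one A 0) (abs_barycenter_le_one B 0) _)
    calc xiProb (n + 1) 0 A B * Real.exp (rectExponent p A B)
        ≤ xiProb (n + 1) 0 A B * _ := mul_le_mul_of_nonneg_left hexp (xiProb_zero_nonneg A B)
      _ = ∑ a, ∑ c, (1 + p * boolSign a * boolSign c) / 4 *
            (xiProb n 0 (cubeSlice A a) (cubeSlice B c) *
              Real.exp (rectExponent p (cubeSlice A a) (cubeSlice B c))) := by
          simp only [Finset.mul_sum, xiProb_zero_cubeSlice]
          refine Finset.sum_congr rfl fun a _ => Finset.sum_congr rfl fun c _ => ?_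
          ring
      _ ≤ ∑ a, ∑ c, (1 + p * boolSign a * boolSign c) / 4 *
            xiProb n p (cubeSlice A a) (cubeSlice B c) := by
          gcongr with a _ c _
          · linarith [three_quarters_le_one_add_mul_boolSign hp a c]
          · exact ih _ _
      _ = xiProb (n + 1) p A B := (xiProb_succ p A B).symm

theorem xiProb_zero_mul_exp_barycenter_le {n : ℕ} {p : ℝ} (hp : |p| ≤ 1 / 4)
    (A B : Finset (Fin n → Bool)) :
    xiProb n 0 A B * Real.exp (p * ∑ i, barycenter A i * barycenter B i
      - 5 * p ^ 2 * (cubeDeficit A + cubeDeficit B)) ≤ xiProb n p A B := by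
  refine le_trans ?_ (xiProb_zero_mul_exp_rectExponent_le hp A B)
  refine mul_le_mul_of_nonneg_left (Real.exp_le_exp.2 ?_) (xiProb_zero_nonneg A B)
  rw [rectExponent, Finset.mul_sum]
  gcongr with i
  exact le_add_of_nonneg_right (by positivity)

theorem exp_neg_mul_xiProb_zero_le_half_mul_add {n : ℕ} {p : ℝ} (hp : |p| ≤ 1 / 4)
    (A B : Finset (Fin n → Bool)) (s : ℝ) :
    Real.exp (-(5 * p ^ 2 * (cubeDeficit A + cubeDeficit B))) * xiProb n 0 A B
      ≤ 1 / 2 * (Real.exp s * xiProb n (-p) A B + Real.exp (-s) * xiProb n p A B) := by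
  have hpos := xiProb_zero_mul_exp_barycenter_le hp A B
  have hneg := xiProb_zero_mul_exp_barycenter_le (p := -p) (by rwa [abs_neg]) A B
  rw [neg_sq] at hneg
  set r := p * ∑ i, barycenter A i * barycenter B i with hr
  set D := 5 * p ^ 2 * (cubeDeficit A + cubeDeficit B)
  calc Real.exp (-D) * xiProb n 0 A B
      ≤ Real.exp (-D) * xiProb n 0 A B * Real.cosh (s - r) :=
        le_mul_of_one_le_right (mul_nonneg (Real.exp_pos _).le (xiProb_zero_nonneg A B))
          (Real.one_le_cosh _)
    _ = 1 / 2 * (Real.exp s * (xiProb n 0 A B * Real.exp (-r - D))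
          + Real.exp (-s) * (xiProb n 0 A B * Real.exp (r - D))) := by
        rw [Real.cosh_eq]
        simp only [sub_eq_add_neg, neg_add, neg_neg, Real.exp_add]
        ring
    _ ≤ _ := by
        rw [neg_mul, ← hr] at hneg
        gcongr

theorem stmt2 :
    ∀ b > (0 : ℝ), ∃ δ > (0 : ℝ), ∃ N₀ : ℕ, ∀ N ≥ N₀,
      ∀ A B : Finset (Fin N → Bool),
        xiProb N 0 A B ≥ (2 : ℝ) ^ (-δ * (N : ℝ)) →
        ∀ s : ℝ,
          (1 / 2) * (Real.exp s * xiProb N (-Real.sqrt (b / N)) A B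
              + Real.exp (-s) * xiProb N (Real.sqrt (b / N)) A B)
            ≥ (2 / 3) * xiProb N 0 A B := by
  intro b hb
  refine ⟨1 / (15 * b), by positivity, ⌈16 * b⌉₊, fun N hN A B hAB s => ?_⟩
  have hNb : 16 * b ≤ N := Nat.ceil_le.1 hN
  have hN0 : (0 : ℝ) < N := by linarith
  have hp : |√(b / N)| ≤ 1 / 4 := by
    rw [abs_of_nonneg (Real.sqrt_nonneg _), Real.sqrt_le_left (by norm_num), div_le_iff₀ hN0]
    linarith
  have hdeficit : 5 * √(b / N) ^ 2 * (cubeDeficit A + cubeDeficit B) ≤ 1 / 3 :=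
    calc 5 * √(b / N) ^ 2 * (cubeDeficit A + cubeDeficit B)
        ≤ 5 * √(b / N) ^ 2 * (1 / (15 * b) * N * Real.log 2) := by
          gcongr
          exact cubeDeficit_add_cubeDeficit_le (by rwa [← neg_mul])
      _ = 1 / 3 * Real.log 2 := by
          rw [Real.sq_sqrt (by positivity)]
          field_simp
          norm_num
      _ ≤ 1 / 3 := by linarith [Real.log_two_lt_d9]
  have hexp : 2 / 3 ≤ Real.exp (-(5 * √(b / N) ^ 2 * (cubeDeficit A + cubeDeficit B))) :=
    le_trans (by linarith) (Real.add_one_le_exp _)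
  exact (mul_le_mul_of_nonneg_right hexp (xiProb_zero_nonneg A B)).trans
    (exp_neg_mul_xiProb_zero_le_half_mul_add hp A B s)
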